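/- For a = 1, the map F(x,y,z) = (y, z, (1+y+z)/x) satisfies F⁸ = id on O⁺; that is, every point of the positive octant is periodic of period dividing 8. -/

import Mathlib

/-!
Along an orbit the coordinates form a sequence with `uₙ₊₃ = (1 + uₙ₊₁ + uₙ₊₂) / uₙ`. Starting from
`x, y, z` the next five terms simplify, thanks to the factorization
`x y + y (1 + y + z) + (1 + x + y + z + x z) = (1 + x + y) (1 + y + z)`, to
`(1+y+z)/x`, `(1+x+y+z+xz)/(xy)`, `(1+x+y)(1+y+z)/(xyz)`, `(1+x+y+z+xz)/(yz)`, `(1+x+y)/z`,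
after which the sequence returns to `x, y, z`. All these terms are positive, so every
division is legitimate.
-/

/-- For `a = 1` the Lyness map `F(x,y,z) = (y, z, (1+y+z)/x)` satisfies
`F⁸ = id` on the positive octant. -/
theorem lyness_a_one_period_eight :
    let F : ℝ × ℝ × ℝ → ℝ × ℝ × ℝ := fun p => (p.2.1, p.2.2, (1 + p.2.1 + p.2.2) / p.1)
    ∀ p : ℝ × ℝ × ℝ, 0 < p.1 → 0 < p.2.1 → 0 < p.2.2 → F^[8] p = p := by
  intro F p hx hy hz
  obtain ⟨x, y, z⟩ := p
  simp only at hx hy hz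
  have hF : ∀ u v w t : ℝ, (1 + v + w) / u = t → F (u, v, w) = (v, w, t) := by
    rintro u v w t rfl
    rfl
  have h1 : 1 + y + z ≠ 0 := by positivity
  have h2 : 1 + x + y + z + x * z ≠ 0 := by positivity
  have h3 : 1 + x + y ≠ 0 := by positivity
  -- The recursion `(1 + v + w) / u = t` for consecutive terms `u, v, w, t` of the closed forms.
  have e2 : (1 + z + ((1 + y + z) / x)) / y = (1 + x + y + z + x * z) / (x * y) := by
    field_simp
    ring
  have e3 : (1 + ((1 + y + z) / x) + ((1 + x + y + z + x * z) / (x * y))) / z = (1 + x + y) * (1 + y + z) / (x * y * z) := by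
    field_simp
    ring
  have e4 : (1 + ((1 + x + y + z + x * z) / (x * y)) + ((1 + x + y) * (1 + y + z) / (x * y * z))) /
      ((1 + y + z) / x) = (1 + x + y + z + x * z) / (y * z) := by
    field_simp
    ring
  have e5 : (1 + ((1 + x + y) * (1 + y + z) / (x * y * z)) + ((1 + x + y + z + x * z) / (y * z))) /
      ((1 + x + y + z + x * z) / (x * y)) = (1 + x + y) / z := by
    field_simp
    ring
  have e6 : (1 + ((1 + x + y + z + x * z) / (y * z)) + ((1 + x + y) / z)) /
      ((1 + x + y) * (1 + y + z) / (x * y * z)) = x := by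
    field_simp
    ring
  have e7 : (1 + ((1 + x + y) / z) + x) /
      ((1 + x + y + z + x * z) / (y * z)) = y := by
    field_simp
    ring
  have e8 : (1 + x + y) / ((1 + x + y) / z) = z := by
    field_simp
  simp only [Function.iterate_succ_apply, Function.iterate_zero, id]
  rw [hF x y z _ rfl, hF _ _ _ _ e2, hF _ _ _ _ e3, hF _ _ _ _ e4, hF _ _ _ _ e5,
    hF _ _ _ _ e6, hF _ _ _ _ e7, hF _ _ _ _ e8]
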